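/- Assume the dHPR setup. Suppose a KKT point u* = (z*, w*, v*, x*) exists and that {u^k}_{k≥0}, {ū^k}_{k≥1} is a dHPR trajectory with initial point u⁰ = (z⁰, w⁰, v⁰, x⁰). Then f*(z*) and r*(v*) are finite, and for every k ≥ 0 the following inequalities hold in EReal: f*(z̄^{k+1}) + r*(v̄^{k+1}) ≤ f*(z*) + r*(v*) + (3·R₀ + ‖x*‖/√σ)·R₀/(k+1), and f*(z*) + r*(v*) ≤ f*(z̄^{k+1}) + r*(v̄^{k+1}) + (‖x*‖/√σ)·R₀/(k+1). -/

import Mathlib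

/-!
Write `y = (z, w)`, `K y = Aᵀ z + Uᵀ w`, and use the coordinates `(y, x - σ K y)`. In these
coordinates the dHPR (degenerate) metric is the positive semidefinite form
`M((y, s), (y', s')) = ⟨s, s'⟩ / σ + ⟨y, T y'⟩` (`Mform`), and `R₀² = M(u⁰ - u*, u⁰ - u*)`.

The optimality conditions of the two subproblems (`v_subgradient`, `zw_subgradient`) say that a step
`u ↦ ū` is a proximal-point step, in the metric `M`, for the KKT operator. Monotonicity of that
operator gives `M(ū - ū', (u - ū) - (u' - ū')) ≥ 0` for pairs of steps and `M(ū - u*, u - ū) ≥ 0`.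
The update (iv) is then a Halpern iteration, for which these two inequalities alone yield
`‖uᵏ - ūᵏ⁺¹‖_M ≤ R₀ / (k + 1)` and `‖ūᵏ⁺¹ - u*‖_M ≤ R₀` (`halpern_rate`).

Since `K y* + v* = 0`, the residual `ρ = K ȳ + v̄` satisfies `uᵏ - ūᵏ⁺¹ = (yᵏ - ȳᵏ⁺¹, σ ρ)`, so
`⟨x*, ρ⟩ = M((0, x*), u - ū)`. The subgradient inequalities at `ū` and at `u*` bound the objective
error above by `M(ū - u*, u - ū) + ⟨x*, ρ⟩` and below by `⟨x*, ρ⟩`; the Cauchy-Schwarz inequality for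
`M` finishes the proof (`objective_bounds`), with `R₀` in place of `3 R₀`.
-/

open Matrix

noncomputable section

/-- Euclidean norm on `Fin d → ℝ`, `‖x‖ = √⟨x,x⟩`. -/
def euclNorm {d : ℕ} (x : Fin d → ℝ) : ℝ := Real.sqrt (x ⬝ᵥ x)

/-- Fenchel conjugate of a real-valued function `g : ℝ^d → ℝ`, with values in `EReal`. -/
def fconj {d : ℕ} (g : (Fin d → ℝ) → ℝ) (v : Fin d → ℝ) : EReal :=
  ⨆ y : Fin d → ℝ, ((v ⬝ᵥ y - g y : ℝ) : EReal)

/-- The sGS proximal matrix `T = blkdiag(σ·S_z + Ŝ_z, σ·S_w)` of the dHPR setup, where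
`S_w = λ_U·I − U²` and `Ŝ_z = σ·A·U·(S_w + U²)⁻¹·U·Aᵀ`. -/
def TmatD {m n : ℕ} (σ lU : ℝ) (A : Matrix (Fin m) (Fin n) ℝ) (U : Matrix (Fin n) (Fin n) ℝ)
    (Sz : Matrix (Fin m) (Fin m) ℝ) : Matrix (Fin m ⊕ Fin n) (Fin m ⊕ Fin n) ℝ :=
  Matrix.fromBlocks
    (σ • Sz +
      σ • (A * U * ((lU • (1 : Matrix (Fin n) (Fin n) ℝ) - U * U) + U * U)⁻¹ * U * Aᵀ)) 0 0
    (σ • (lU • (1 : Matrix (Fin n) (Fin n) ℝ) - U * U))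

/-- The `EReal`-valued objective of the `v`-subproblem (step (i) of a dHPR trajectory). -/
def vObj {m n : ℕ} (σ : ℝ) (r : (Fin n → ℝ) → ℝ) (A : Matrix (Fin m) (Fin n) ℝ)
    (U : Matrix (Fin n) (Fin n) ℝ) (xk : Fin n → ℝ) (zk : Fin m → ℝ) (wk : Fin n → ℝ)
    (v : Fin n → ℝ) : EReal :=
  fconj r v + ((-(xk ⬝ᵥ v) + σ / 2 * euclNorm (Aᵀ *ᵥ zk + Uᵀ *ᵥ wk + v) ^ 2 : ℝ) : EReal)

/-- The `EReal`-valued objective of the joint `(z,w)`-subproblem (step (iii) of a dHPR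
trajectory), with proximal matrix `Tm`. -/
def zwObj {m n : ℕ} (σ : ℝ) (f : (Fin m → ℝ) → ℝ) (A : Matrix (Fin m) (Fin n) ℝ)
    (U : Matrix (Fin n) (Fin n) ℝ) (Tm : Matrix (Fin m ⊕ Fin n) (Fin m ⊕ Fin n) ℝ)
    (xbar vbar : Fin n → ℝ) (z0 : Fin m → ℝ) (w0 : Fin n → ℝ)
    (z : Fin m → ℝ) (w : Fin n → ℝ) : EReal :=
  fconj f z +
    ((-(xbar ⬝ᵥ (Aᵀ *ᵥ z + Uᵀ *ᵥ w)) + σ / 2 * euclNorm (Aᵀ *ᵥ z + Uᵀ *ᵥ w + vbar) ^ 2 +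
      1 / 2 * (Sum.elim (z - z0) (w - w0) ⬝ᵥ (Tm *ᵥ Sum.elim (z - z0) (w - w0))) : ℝ) : EReal)

/-- The initial distance `R₀ = ‖u⁰ − u*‖_𝓜`. -/
def Rinit {m n : ℕ} (σ lU : ℝ) (A : Matrix (Fin m) (Fin n) ℝ) (U : Matrix (Fin n) (Fin n) ℝ)
    (Sz : Matrix (Fin m) (Fin m) ℝ) (dz : Fin m → ℝ) (dw dx : Fin n → ℝ) : ℝ :=
  Real.sqrt
    (σ * euclNorm (Aᵀ *ᵥ dz + Uᵀ *ᵥ dw) ^ 2 +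
      Sum.elim dz dw ⬝ᵥ (TmatD σ lU A U Sz *ᵥ Sum.elim dz dw) -
      2 * (dx ⬝ᵥ (Aᵀ *ᵥ dz + Uᵀ *ᵥ dw)) + 1 / σ * euclNorm dx ^ 2)

/-! ### Halpern iteration in a semi-inner product -/

/-- The Lyapunov inequality behind the `1/k` rate: with `g_k = u_k - ū_{k+1}`, the quantity
`(k + 1) (k ‖g_k‖² + ⟨g_k, u_k - u_0⟩)` is nonincreasing and vanishes at `k = 0`. -/
lemma halpern_potential {E : Type*} [AddCommGroup E] [Module ℝ E]
    (B : LinearMap.BilinForm ℝ E) (hsymm : ∀ x y, B x y = B y x)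
    (u ub : ℕ → E)
    (hupd : ∀ k : ℕ, u (k + 1) = ((k : ℝ) + 2)⁻¹ • u 0 +
      (((k : ℝ) + 1) / ((k : ℝ) + 2)) • ((2 : ℝ) • ub (k + 1) - u k))
    (hmono : ∀ j k : ℕ, 0 ≤ B (ub (j + 1) - ub (k + 1))
      ((u j - ub (j + 1)) - (u k - ub (k + 1)))) (k : ℕ) :
    (k : ℝ) * B (u k - ub (k + 1)) (u k - ub (k + 1)) +
      B (u k - ub (k + 1)) (u k - u 0) ≤ 0 := by
  induction k with
  | zero => simp
  | succ k ih =>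
    have hm := hmono (k + 1) k
    have hN : (k : ℝ) + 2 ≠ 0 := by positivity
    have hN0 : (0 : ℝ) ≤ k := Nat.cast_nonneg k
    set g := u k - ub (k + 1) with hg
    set g' := u (k + 1) - ub (k + 1 + 1) with hg'
    set a := u k - u 0 with ha
    have ha' : u (k + 1) - u 0 = (((k : ℝ) + 1) / ((k : ℝ) + 2)) • (a - (2 : ℝ) • g) := by
      rw [hupd k, ha, hg]
      match_scalars <;> field_simp <;> ring
    have hd : ub (k + 1 + 1) - ub (k + 1) =
        (((k : ℝ) + 1) / ((k : ℝ) + 2)) • (a - (2 : ℝ) • g) - a - g' + g := by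
      rw [← ha', ha, hg, hg']; abel
    rw [hd] at hm
    rw [ha']
    -- the weight `(k + 1)(k + 2)` makes the cross terms `B g' g` cancel
    have key : ((k : ℝ) + 1) * ((k : ℝ) + 2) *
        B ((((k : ℝ) + 1) / ((k : ℝ) + 2)) • (a - (2 : ℝ) • g) - a - g' + g) (g' - g) =
        ((k : ℝ) + 1) * ((k : ℝ) * B g g + B g a) - ((k : ℝ) + 2) *
          (((k + 1 : ℕ) : ℝ) * B g' g' +
            B g' ((((k : ℝ) + 1) / ((k : ℝ) + 2)) • (a - (2 : ℝ) • g))) := by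
      simp only [map_add, map_sub, map_smul, LinearMap.add_apply, LinearMap.sub_apply,
        LinearMap.smul_apply, smul_eq_mul, hsymm a g, hsymm a g', hsymm g' g]
      push_cast
      field_simp
      ring
    have h1 : 0 ≤ ((k : ℝ) + 1) * ((k : ℝ) + 2) *
        B ((((k : ℝ) + 1) / ((k : ℝ) + 2)) • (a - (2 : ℝ) • g) - a - g' + g) (g' - g) := by
      positivity
    have h2 : ((k : ℝ) + 1) * ((k : ℝ) * B g g + B g a) ≤ 0 :=
      mul_nonpos_of_nonneg_of_nonpos (by positivity) ih
    have h3 : ((k : ℝ) + 2) * (((k + 1 : ℕ) : ℝ) * B g' g' +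
            B g' ((((k : ℝ) + 1) / ((k : ℝ) + 2)) • (a - (2 : ℝ) • g))) ≤ 0 := by linarith
    exact nonpos_of_mul_nonpos_right h3 (by positivity)

/-- The relaxed step `u ↦ 2ū - u` does not increase the distance to `us`, so its convex combinations
with the anchor `u 0` stay within the initial distance. -/
lemma halpern_bounded {E : Type*} [AddCommGroup E] [Module ℝ E]
    (B : LinearMap.BilinForm ℝ E) (hsymm : ∀ x y, B x y = B y x) (hnn : ∀ x, 0 ≤ B x x)
    (u ub : ℕ → E) (us : E)
    (hupd : ∀ k : ℕ, u (k + 1) = ((k : ℝ) + 2)⁻¹ • u 0 +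
      (((k : ℝ) + 1) / ((k : ℝ) + 2)) • ((2 : ℝ) • ub (k + 1) - u k))
    (hsol : ∀ k : ℕ, 0 ≤ B (ub (k + 1) - us) (u k - ub (k + 1))) (k : ℕ) :
    B (u k - us) (u k - us) ≤ B (u 0 - us) (u 0 - us) := by
  induction k with
  | zero => exact le_rfl
  | succ k ih =>
    have hs := hsol k
    have hN0 : (0 : ℝ) ≤ k := Nat.cast_nonneg k
    have hN : (k : ℝ) + 2 ≠ 0 := by positivity
    set e := u k - us with he
    set e0 := u 0 - us with he0
    set b := ub (k + 1) - us with hb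
    have hd : u k - ub (k + 1) = e - b := by rw [he, hb]; abel
    rw [hd] at hs
    have hq : u (k + 1) - us = ((k : ℝ) + 2)⁻¹ • e0 +
        (((k : ℝ) + 1) / ((k : ℝ) + 2)) • ((2 : ℝ) • b - e) := by
      rw [hupd k, he, he0, hb]
      match_scalars <;> field_simp <;> ring
    have hqq : B ((2 : ℝ) • b - e) ((2 : ℝ) • b - e) ≤ B e0 e0 := by
      simp only [map_sub, map_smul, LinearMap.sub_apply,
        LinearMap.smul_apply, smul_eq_mul] at hs ⊢
      have := hsymm b e
      linarith
    rw [hq]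
    set q := (2 : ℝ) • b - e
    have h0 := hnn (e0 - q)
    -- strong convexity identity for a squared seminorm
    have key : B (((k : ℝ) + 2)⁻¹ • e0 + (((k : ℝ) + 1) / ((k : ℝ) + 2)) • q)
        (((k : ℝ) + 2)⁻¹ • e0 + (((k : ℝ) + 1) / ((k : ℝ) + 2)) • q) =
        ((k : ℝ) + 2)⁻¹ * B e0 e0 + (((k : ℝ) + 1) / ((k : ℝ) + 2)) * B q q -
        ((k : ℝ) + 2)⁻¹ * (((k : ℝ) + 1) / ((k : ℝ) + 2)) * B (e0 - q) (e0 - q) := by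
      simp only [map_add, map_sub, map_smul, LinearMap.add_apply, LinearMap.sub_apply,
        LinearMap.smul_apply, smul_eq_mul, hsymm q e0]
      field_simp
      ring
    have h1 : 0 ≤ ((k : ℝ) + 2)⁻¹ * (((k : ℝ) + 1) / ((k : ℝ) + 2)) * B (e0 - q) (e0 - q) := by
      positivity
    have h2 : (((k : ℝ) + 1) / ((k : ℝ) + 2)) * B q q ≤
        (((k : ℝ) + 1) / ((k : ℝ) + 2)) * B e0 e0 :=
      mul_le_mul_of_nonneg_left hqq (by positivity)
    have h3 : ((k : ℝ) + 2)⁻¹ * B e0 e0 + (((k : ℝ) + 1) / ((k : ℝ) + 2)) * B e0 e0 =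
        B e0 e0 := by
      field_simp
      ring
    linarith

/-- Rate of the Halpern iteration. The map `u ↦ ū` enters only through the monotonicity inequalities
`hmono` and `hsol`, so the form `B` may be degenerate. -/
lemma halpern_rate {E : Type*} [AddCommGroup E] [Module ℝ E]
    (B : LinearMap.BilinForm ℝ E) (hsymm : ∀ x y, B x y = B y x) (hnn : ∀ x, 0 ≤ B x x)
    (u ub : ℕ → E) (us : E)
    (hupd : ∀ k : ℕ, u (k + 1) = ((k : ℝ) + 2)⁻¹ • u 0 +
      (((k : ℝ) + 1) / ((k : ℝ) + 2)) • ((2 : ℝ) • ub (k + 1) - u k))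
    (hmono : ∀ j k : ℕ, 0 ≤ B (ub (j + 1) - ub (k + 1))
      ((u j - ub (j + 1)) - (u k - ub (k + 1))))
    (hsol : ∀ k : ℕ, 0 ≤ B (ub (k + 1) - us) (u k - ub (k + 1))) (k : ℕ) :
    √(B (u k - ub (k + 1)) (u k - ub (k + 1))) ≤ √(B (u 0 - us) (u 0 - us)) / ((k : ℝ) + 1) ∧
    √(B (ub (k + 1) - us) (ub (k + 1) - us)) ≤ √(B (u 0 - us) (u 0 - us)) := by
  have hpot := halpern_potential B hsymm u ub hupd hmono k
  have hbd := halpern_bounded B hsymm hnn u ub us hupd hsol k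
  have hs := hsol k
  have hk : (0 : ℝ) < k + 1 := by positivity
  have hcs := B.apply_mul_apply_le_of_forall_zero_le hnn (u k - ub (k + 1)) (u 0 - us)
  rw [hsymm (u 0 - us)] at hcs
  have hg0 := hnn (u k - ub (k + 1))
  set g := u k - ub (k + 1) with hg
  set e0 := u 0 - us with he0
  set b := ub (k + 1) - us with hb
  have h1 : u k - us = b + g := by rw [hb, hg]; abel
  have h2 : u k - u 0 = b + g - e0 := by rw [hb, hg, he0]; abel
  rw [h1] at hbd
  rw [h2] at hpot
  simp only [map_add, map_sub, LinearMap.add_apply] at hbd hpot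
  have hbg := hsymm b g
  constructor
  · rw [le_div_iff₀ hk, ← Real.sqrt_sq hk.le, ← Real.sqrt_mul hg0]
    refine Real.sqrt_le_sqrt ?_
    have h3 : ((k : ℝ) + 1) * B g g ≤ B g e0 := by linarith
    rcases hg0.eq_or_lt with h | h
    · rw [← h]; simpa using hnn e0
    · have h4 : (((k : ℝ) + 1) * B g g) * (((k : ℝ) + 1) * B g g) ≤ B g e0 * B g e0 :=
        mul_self_le_mul_self (by positivity) h3
      have h5 : B g g * (B g g * ((k : ℝ) + 1) ^ 2) ≤ B g g * B e0 e0 := by linarith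
      exact le_of_mul_le_mul_left h5 h
  · refine Real.sqrt_le_sqrt ?_
    linarith

/-! ### Conjugates and first-order optimality -/

lemma nonneg_of_forall_quadratic {L Q : ℝ}
    (h : ∀ t : ℝ, 0 < t → t ≤ 1 → 0 ≤ t * L + t ^ 2 * Q) : 0 ≤ L := by
  by_contra! hL
  set t := min 1 (-L / (2 * (|Q| + 1))) with ht
  have hp : 0 < 2 * (|Q| + 1) := by positivity
  have ht0 : 0 < t := lt_min one_pos (div_pos (by linarith) hp)
  have h1 := h t ht0 (min_le_left _ _)
  have h2 : t * (2 * (|Q| + 1)) ≤ -L := (le_div_iff₀ hp).1 (min_le_right _ _)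
  have h3 : 0 ≤ L + t * Q := by
    refine nonneg_of_mul_nonneg_right (a := t) ?_ ht0
    linarith
  have h4 : t * Q ≤ t * |Q| := mul_le_mul_of_nonneg_left (le_abs_self Q) ht0.le
  nlinarith

lemma euclNorm_sq {d : ℕ} (x : Fin d → ℝ) : euclNorm x ^ 2 = x ⬝ᵥ x :=
  Real.sq_sqrt (by simpa using dotProduct_star_self_nonneg x)

lemma fconj_ne_bot {d : ℕ} (g : (Fin d → ℝ) → ℝ) (v : Fin d → ℝ) : fconj g v ≠ ⊥ := by
  intro h
  have h1 := le_iSup (fun y : Fin d → ℝ => ((v ⬝ᵥ y - g y : ℝ) : EReal)) 0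
  rw [fconj] at h
  rw [h] at h1
  exact EReal.coe_ne_bot _ (le_bot_iff.1 h1)

lemma le_of_fconj_eq {d : ℕ} {g : (Fin d → ℝ) → ℝ} {v : Fin d → ℝ} {α : ℝ}
    (h : fconj g v = α) (y : Fin d → ℝ) : v ⬝ᵥ y - g y ≤ α := by
  have h1 := le_iSup (fun y : Fin d → ℝ => ((v ⬝ᵥ y - g y : ℝ) : EReal)) y
  rw [fconj] at h
  rw [h] at h1
  exact_mod_cast h1

lemma fconj_segment_le {d : ℕ} {g : (Fin d → ℝ) → ℝ} {a b : Fin d → ℝ} {α β t : ℝ}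
    (ha : fconj g a = α) (hb : fconj g b = β) (ht0 : 0 ≤ t) (ht1 : t ≤ 1) :
    fconj g ((1 - t) • a + t • b) ≤ (((1 - t) * α + t * β : ℝ) : EReal) := by
  refine iSup_le fun y => ?_
  have h1 := mul_le_mul_of_nonneg_left (le_of_fconj_eq ha y) (sub_nonneg.2 ht1)
  have h2 := mul_le_mul_of_nonneg_left (le_of_fconj_eq hb y) ht0
  simp only [add_dotProduct, smul_dotProduct, smul_eq_mul]
  exact_mod_cast (by linarith :
    (1 - t) * (a ⬝ᵥ y) + t * (b ⬝ᵥ y) - g y ≤ (1 - t) * α + t * β)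

/-- First-order optimality along a segment: if `a` minimizes `g* + q` on `[a, b]`, where `q` is
quadratic along the segment with slope `L` at `a`, then `g*(b) - g*(a) ≥ -L`. Points are
parametrized by `t`, with `a` at `t = 0` and `b` at `t = 1`. -/
lemma fconj_le_of_isMin {d : ℕ} {g : (Fin d → ℝ) → ℝ} {a b : Fin d → ℝ} {α β : ℝ}
    (ha : fconj g a = α) (hb : fconj g b = β) (q : ℝ → ℝ) (L Q : ℝ)
    (hq : ∀ t, q t = q 0 + t * L + t ^ 2 * Q)
    (hmin : ∀ t : ℝ, 0 < t → t ≤ 1 → fconj g a + ((q 0 : ℝ) : EReal) ≤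
      fconj g ((1 - t) • a + t • b) + ((q t : ℝ) : EReal)) :
    α ≤ β + L := by
  suffices h : 0 ≤ β + L - α by linarith
  refine nonneg_of_forall_quadratic (Q := Q) fun t ht0 ht1 => ?_
  have h1 := (hmin t ht0 ht1).trans
    (add_le_add_left (fconj_segment_le ha hb ht0.le ht1) _)
  rw [ha, hq t] at h1
  have h2 : α + q 0 ≤ ((1 - t) * α + t * β) + (q 0 + t * L + t ^ 2 * Q) := by exact_mod_cast h1
  linarith

/-- The fixed-point equation `p = prox_g (s + p)` means that `s` is a subgradient of `g` at `p`. -/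
lemma subgradient_of_prox {d : ℕ} {g : (Fin d → ℝ) → ℝ} (hg : ConvexOn ℝ Set.univ g)
    {p s : Fin d → ℝ}
    (h : ∀ y, g p + 1 / 2 * euclNorm (p - (s + p)) ^ 2 ≤
      g y + 1 / 2 * euclNorm (y - (s + p)) ^ 2) (y : Fin d → ℝ) :
    g p + s ⬝ᵥ (y - p) ≤ g y := by
  suffices h : 0 ≤ g y - g p - s ⬝ᵥ (y - p) by linarith
  refine nonneg_of_forall_quadratic (Q := 1 / 2 * ((y - p) ⬝ᵥ (y - p))) fun t ht0 ht1 => ?_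
  have h1 := h ((1 - t) • p + t • y)
  have h2 := hg.2 (Set.mem_univ p) (Set.mem_univ y) (sub_nonneg.2 ht1) ht0.le (by ring)
  have e1 : p - (s + p) = -s := by abel
  have e2 : (1 - t) • p + t • y - (s + p) = t • (y - p) - s := by
    module
  rw [euclNorm_sq, euclNorm_sq, e1, e2] at h1
  set c := y - p
  simp only [sub_dotProduct, dotProduct_sub, smul_dotProduct, dotProduct_smul, smul_eq_mul,
    neg_dotProduct, dotProduct_neg, dotProduct_comm c s] at h1 h2
  linarith

/-- Fenchel-Young equality at a fixed point of the proximal map. -/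
lemma fconj_eq_of_prox {d : ℕ} {g : (Fin d → ℝ) → ℝ} (hg : ConvexOn ℝ Set.univ g)
    {p s : Fin d → ℝ}
    (h : ∀ y, g p + 1 / 2 * euclNorm (p - (s + p)) ^ 2 ≤
      g y + 1 / 2 * euclNorm (y - (s + p)) ^ 2) :
    fconj g s = ((s ⬝ᵥ p - g p : ℝ) : EReal) := by
  refine le_antisymm (iSup_le fun y => ?_) (le_iSup (fun y : Fin d → ℝ =>
    ((s ⬝ᵥ y - g y : ℝ) : EReal)) p)
  have h1 := subgradient_of_prox hg h y
  rw [dotProduct_sub] at h1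
  exact_mod_cast (by linarith : s ⬝ᵥ y - g y ≤ s ⬝ᵥ p - g p)

lemma fconj_ne_top_of_le {d : ℕ} {g : (Fin d → ℝ) → ℝ} {a b : Fin d → ℝ} {β p q : ℝ}
    (hb : fconj g b = β) (h : fconj g a + (p : EReal) ≤ fconj g b + (q : EReal)) :
    fconj g a ≠ ⊤ := by
  intro ha
  rw [ha, hb, EReal.top_add_coe, top_le_iff] at h
  exact EReal.coe_ne_top (β + q) (by exact_mod_cast h)

/-! ### The metric and the abstract complexity bound -/

/-- The dHPR metric in the coordinates `(y, s)` with `s = x - σ K y`. It may be degenerate, as `T` is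
only assumed positive semidefinite. -/
def Mform {ι κ : Type*} [Fintype ι] [Fintype κ] (σ : ℝ) (T : Matrix ι ι ℝ) :
    LinearMap.BilinForm ℝ ((ι → ℝ) × (κ → ℝ)) :=
  LinearMap.mk₂ ℝ (fun a b => 1 / σ * (a.2 ⬝ᵥ b.2) + a.1 ⬝ᵥ (T *ᵥ b.1))
    (fun a b c => by simp only [Prod.fst_add, Prod.snd_add, add_dotProduct]; ring)
    (fun r a b => by simp only [Prod.smul_fst, Prod.smul_snd, smul_dotProduct, smul_eq_mul]; ring)
    (fun a b c => by
      simp only [Prod.fst_add, Prod.snd_add, dotProduct_add, mulVec_add]; ring)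
    (fun r a b => by
      simp only [Prod.smul_fst, Prod.smul_snd, dotProduct_smul, mulVec_smul, smul_eq_mul]; ring)

lemma Mform_apply {ι κ : Type*} [Fintype ι] [Fintype κ] (σ : ℝ) (T : Matrix ι ι ℝ)
    (a b : (ι → ℝ) × (κ → ℝ)) :
    Mform σ T a b = 1 / σ * (a.2 ⬝ᵥ b.2) + a.1 ⬝ᵥ (T *ᵥ b.1) := rfl

lemma Mform_symm {ι κ : Type*} [Fintype ι] [Fintype κ] (σ : ℝ) {T : Matrix ι ι ℝ}
    (hT : T.PosSemidef) (a b : (ι → ℝ) × (κ → ℝ)) : Mform σ T a b = Mform σ T b a := by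
  have h : Tᵀ = T := by simpa using hT.isHermitian.eq
  rw [Mform_apply, Mform_apply, dotProduct_comm a.2, dotProduct_mulVec, ← mulVec_transpose, h,
    dotProduct_comm (T *ᵥ a.1)]

lemma Mform_nonneg {ι κ : Type*} [Fintype ι] [Fintype κ] {σ : ℝ} (hσ : 0 < σ) {T : Matrix ι ι ℝ}
    (hT : T.PosSemidef) (a : (ι → ℝ) × (κ → ℝ)) : 0 ≤ Mform σ T a a := by
  have h1 : 0 ≤ a.1 ⬝ᵥ (T *ᵥ a.1) := by simpa using hT.dotProduct_mulVec_nonneg a.1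
  have h2 : 0 ≤ a.2 ⬝ᵥ a.2 := by simpa using dotProduct_star_self_nonneg a.2
  rw [Mform_apply]
  positivity

/-- Pairing a primal-dual displacement `(y, x, v)` against a step whose second coordinate is `σ` times
the residual `K y + v`. This converts monotonicity of subgradients into monotonicity in `M`. -/
lemma Mform_residual {ι κ : Type*} [Fintype ι] [Fintype κ] {σ : ℝ} (hσ : 0 < σ)
    (K : Matrix κ ι ℝ) (T : Matrix ι ι ℝ) (y η : ι → ℝ) (x v : κ → ℝ) :
    Mform σ T (y, x - σ • (K *ᵥ y)) (η, σ • (K *ᵥ y + v)) =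
      x ⬝ᵥ v + (x - σ • (K *ᵥ y + v)) ⬝ᵥ (K *ᵥ y) + y ⬝ᵥ (T *ᵥ η) := by
  rw [Mform_apply]
  simp only [sub_dotProduct, smul_dotProduct, dotProduct_smul, add_dotProduct, dotProduct_add,
    smul_eq_mul, dotProduct_comm v (K *ᵥ y)]
  field_simp
  ring

lemma abs_bilin_le {E : Type*} [AddCommGroup E] [Module ℝ E] (B : LinearMap.BilinForm ℝ E)
    (hsymm : ∀ x y, B x y = B y x) (hnn : ∀ x, 0 ≤ B x x) (a b : E) :
    |B a b| ≤ √(B a a) * √(B b b) := by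
  have h := B.apply_mul_apply_le_of_forall_zero_le hnn a b
  rw [hsymm b a] at h
  rw [← Real.sqrt_mul (hnn a)]
  exact Real.abs_le_sqrt (by linarith)

/-- The complexity bounds for real-valued sequences: `F`, `G` stand for the values of `f*` and `r*` at
the iterates, `Fs`, `Gs` for those at the KKT point, and all that is used of the subproblems is the
resulting subgradient inequalities. -/
theorem objective_bounds {ι κ : Type*} [Fintype ι] [Fintype κ] {σ : ℝ} (hσ : 0 < σ)
    (K : Matrix κ ι ℝ) (T : Matrix ι ι ℝ) (hT : T.PosSemidef)
    (y yb : ℕ → ι → ℝ) (x xb vb : ℕ → κ → ℝ) (ys : ι → ℝ) (vs xs : κ → ℝ)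
    (F G : ℕ → ℝ) (Fs Gs : ℝ) (hK : K *ᵥ ys + vs = 0)
    (hx : ∀ k, xb (k + 1) = x k - σ • (K *ᵥ y k + vb (k + 1)))
    (hupdy : ∀ k : ℕ, y (k + 1) = ((k : ℝ) + 2)⁻¹ • y 0 +
      (((k : ℝ) + 1) / ((k : ℝ) + 2)) • ((2 : ℝ) • yb (k + 1) - y k))
    (hupdx : ∀ k : ℕ, x (k + 1) = ((k : ℝ) + 2)⁻¹ • x 0 +
      (((k : ℝ) + 1) / ((k : ℝ) + 2)) • ((2 : ℝ) • xb (k + 1) - x k))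
    (hG : ∀ j k, G (k + 1) ≤ G (j + 1) + xb (k + 1) ⬝ᵥ (vb (k + 1) - vb (j + 1)))
    (hGs : ∀ k, G (k + 1) ≤ Gs + xb (k + 1) ⬝ᵥ (vb (k + 1) - vs))
    (hGs' : ∀ k, Gs ≤ G (k + 1) + xs ⬝ᵥ (vs - vb (k + 1)))
    (hF : ∀ j k, F (k + 1) ≤ F (j + 1) +
      ((xb (k + 1) - σ • (K *ᵥ yb (k + 1) + vb (k + 1))) ⬝ᵥ (K *ᵥ (yb (k + 1) - yb (j + 1))) +
        (yb (k + 1) - yb (j + 1)) ⬝ᵥ (T *ᵥ (y k - yb (k + 1)))))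
    (hFs : ∀ k, F (k + 1) ≤ Fs +
      ((xb (k + 1) - σ • (K *ᵥ yb (k + 1) + vb (k + 1))) ⬝ᵥ (K *ᵥ (yb (k + 1) - ys)) +
        (yb (k + 1) - ys) ⬝ᵥ (T *ᵥ (y k - yb (k + 1)))))
    (hFs' : ∀ k, Fs ≤ F (k + 1) + xs ⬝ᵥ (K *ᵥ (ys - yb (k + 1))))
    (R X : ℝ)
    (hR : R = √(Mform σ T (y 0 - ys, (x 0 - xs) - σ • (K *ᵥ (y 0 - ys)))
      (y 0 - ys, (x 0 - xs) - σ • (K *ᵥ (y 0 - ys)))))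
    (hX : X = √(1 / σ * (xs ⬝ᵥ xs))) (k : ℕ) :
    F (k + 1) + G (k + 1) ≤ Fs + Gs + (R + X) * (R / ((k : ℝ) + 1)) ∧
    Fs + Gs ≤ F (k + 1) + G (k + 1) + X * (R / ((k : ℝ) + 1)) := by
  set u : ℕ → (ι → ℝ) × (κ → ℝ) := fun k => (y k, x k - σ • (K *ᵥ y k)) with hu
  set ub : ℕ → (ι → ℝ) × (κ → ℝ) := fun k => (yb k, xb k - σ • (K *ᵥ yb k)) with hub
  set us : (ι → ℝ) × (κ → ℝ) := (ys, xs - σ • (K *ᵥ ys)) with hus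
  have hsymm := Mform_symm (κ := κ) σ hT
  have hnn := Mform_nonneg (κ := κ) hσ hT
  have hupd : ∀ k : ℕ, u (k + 1) = ((k : ℝ) + 2)⁻¹ • u 0 +
      (((k : ℝ) + 1) / ((k : ℝ) + 2)) • ((2 : ℝ) • ub (k + 1) - u k) := by
    intro k
    refine Prod.ext (hupdy k) ?_
    simp only [hu, hub, Prod.snd_add, Prod.smul_snd, Prod.snd_sub]
    rw [hupdx k, hupdy k]
    simp only [mulVec_add, mulVec_smul, mulVec_sub]
    module
  -- the displacement of a step carries the dual residual
  have hdisp : ∀ k, u k - ub (k + 1) =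
      (y k - yb (k + 1), σ • (K *ᵥ yb (k + 1) + vb (k + 1))) := by
    intro k
    refine Prod.ext rfl ?_
    simp only [hu, hub, Prod.snd_sub]
    rw [hx k]
    module
  have hsolM : ∀ k, Mform σ T (ub (k + 1) - us) (u k - ub (k + 1)) =
      (xb (k + 1) - xs) ⬝ᵥ (vb (k + 1) - vs) +
        (xb (k + 1) - xs - σ • (K *ᵥ yb (k + 1) + vb (k + 1))) ⬝ᵥ (K *ᵥ (yb (k + 1) - ys)) +
        (yb (k + 1) - ys) ⬝ᵥ (T *ᵥ (y k - yb (k + 1))) := by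
    intro k
    have e : K *ᵥ (yb (k + 1) - ys) + (vb (k + 1) - vs) = K *ᵥ yb (k + 1) + vb (k + 1) := by
      rw [mulVec_sub, ← sub_zero (K *ᵥ yb (k + 1) + vb (k + 1)), ← hK]; abel
    have e1 : ub (k + 1) - us = (yb (k + 1) - ys,
        (xb (k + 1) - xs) - σ • (K *ᵥ (yb (k + 1) - ys))) := by
      refine Prod.ext rfl ?_
      simp only [hus, hub, Prod.snd_sub, mulVec_sub]
      module
    rw [hdisp, e1, ← e, Mform_residual hσ]
  have hmono : ∀ j k : ℕ, 0 ≤ Mform σ T (ub (j + 1) - ub (k + 1))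
      ((u j - ub (j + 1)) - (u k - ub (k + 1))) := by
    intro j k
    have e : σ • (K *ᵥ yb (j + 1) + vb (j + 1)) - σ • (K *ᵥ yb (k + 1) + vb (k + 1)) =
        σ • (K *ᵥ (yb (j + 1) - yb (k + 1)) + (vb (j + 1) - vb (k + 1))) := by
      rw [mulVec_sub]; module
    have e1 : ub (j + 1) - ub (k + 1) = (yb (j + 1) - yb (k + 1),
        (xb (j + 1) - xb (k + 1)) - σ • (K *ᵥ (yb (j + 1) - yb (k + 1)))) := by
      refine Prod.ext rfl ?_
      simp only [hub, Prod.snd_sub, mulVec_sub]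
      module
    rw [e1, hdisp, hdisp, Prod.mk_sub_mk, e, Mform_residual hσ]
    have h1 := hF j k
    have h2 := hF k j
    have h3 := hG j k
    have h4 := hG k j
    simp only [mulVec_sub, sub_dotProduct, dotProduct_sub, smul_dotProduct,
      add_dotProduct, smul_eq_mul] at h1 h2 h3 h4 ⊢
    linarith
  have hsol : ∀ k : ℕ, 0 ≤ Mform σ T (ub (k + 1) - us) (u k - ub (k + 1)) := by
    intro k
    rw [hsolM]
    have h1 := hFs k
    have h2 := hFs' k
    have h3 := hGs k
    have h4 := hGs' k
    simp only [mulVec_sub, sub_dotProduct, dotProduct_sub] at h1 h2 h3 h4 ⊢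
    linarith
  have hR' : R = √(Mform σ T (u 0 - us) (u 0 - us)) := by
    have e1 : u 0 - us = (y 0 - ys, (x 0 - xs) - σ • (K *ᵥ (y 0 - ys))) := by
      refine Prod.ext rfl ?_
      simp only [hus, hu, Prod.snd_sub, mulVec_sub]
      module
    rw [hR, e1]
  obtain ⟨hr1, hr2⟩ := halpern_rate (Mform σ T) hsymm hnn u ub us hupd hmono hsol k
  rw [← hR'] at hr1 hr2
  have hcs1 := abs_bilin_le (Mform σ T) hsymm hnn (ub (k + 1) - us) (u k - ub (k + 1))
  have hcs2 := abs_bilin_le (Mform σ T) hsymm hnn (0, xs) (u k - ub (k + 1))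
  have hXM : √(Mform σ T ((0, xs) : (ι → ℝ) × (κ → ℝ)) (0, xs)) = X := by
    rw [hX, Mform_apply]; simp
  have hres : Mform σ T ((0, xs) : (ι → ℝ) × (κ → ℝ)) (u k - ub (k + 1)) =
      xs ⬝ᵥ (K *ᵥ yb (k + 1) + vb (k + 1)) := by
    rw [hdisp, Mform_apply]
    simp only [dotProduct_smul, zero_dotProduct, smul_eq_mul, add_zero]
    field_simp
  rw [hXM, hres] at hcs2
  have hX0 : 0 ≤ X := hX ▸ Real.sqrt_nonneg _
  have hR0 : 0 ≤ R := hR ▸ Real.sqrt_nonneg _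
  have hb1 := hcs1.trans (mul_le_mul hr2 hr1 (Real.sqrt_nonneg _) hR0)
  have hb2 := hcs2.trans (mul_le_mul_of_nonneg_left hr1 hX0)
  rw [hsolM] at hb1
  obtain ⟨-, hb1⟩ := abs_le.1 hb1
  obtain ⟨hb2, hb3⟩ := abs_le.1 hb2
  have hKs : xs ⬝ᵥ (K *ᵥ ys) + xs ⬝ᵥ vs = 0 := by rw [← dotProduct_add, hK, dotProduct_zero]
  have h1 := hFs k
  have h2 := hFs' k
  have h3 := hGs k
  have h4 := hGs' k
  simp only [mulVec_sub, sub_dotProduct, dotProduct_sub, dotProduct_add]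
    at h1 h2 h3 h4 hb1 hb2 hb3
  constructor <;> linarith

/-! ### The subproblems -/

lemma TmatD_posSemidef {m n : ℕ} {σ lU : ℝ} (hσ : 0 < σ) (hlU : 0 < lU)
    (A : Matrix (Fin m) (Fin n) ℝ) {U : Matrix (Fin n) (Fin n) ℝ} (hU : U.PosSemidef)
    {Sz : Matrix (Fin m) (Fin m) ℝ} (hSz : Sz.PosSemidef)
    (hSw : (lU • (1 : Matrix (Fin n) (Fin n) ℝ) - U * U).PosSemidef) :
    (TmatD σ lU A U Sz).PosSemidef := by
  have hUt : Uᵀ = U := by simpa using hU.isHermitian.eq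
  -- `S_w + U² = λ_U I`, so `Ŝ_z` is a nonnegative multiple of `(A U)(A U)ᵀ`
  have hinv : (lU • (1 : Matrix (Fin n) (Fin n) ℝ) - U * U + U * U)⁻¹ = lU⁻¹ • 1 := by
    rw [sub_add_cancel]
    exact Matrix.inv_eq_right_inv (by simp [smul_smul, hlU.ne'])
  have hZ : (σ • Sz + σ • (A * U * (lU • (1 : Matrix (Fin n) (Fin n) ℝ) - U * U + U * U)⁻¹ * U
      * Aᵀ)).PosSemidef := by
    have h1 : A * U * (lU⁻¹ • (1 : Matrix (Fin n) (Fin n) ℝ)) * U * Aᵀ =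
        lU⁻¹ • ((A * U) * (A * U)ᴴ) := by
      simp [Matrix.mul_assoc, hUt]
    rw [hinv, h1]
    exact (hSz.smul hσ.le).add
      (((posSemidef_self_mul_conjTranspose (A * U)).smul (by positivity)).smul hσ.le)
  have hW := hSw.smul hσ.le
  refine PosSemidef.of_dotProduct_mulVec_nonneg ?_ fun y => ?_
  · exact IsHermitian.fromBlocks hZ.isHermitian (by simp) hW.isHermitian
  · have h1 := hZ.dotProduct_mulVec_nonneg (y ∘ Sum.inl)
    have h2 := hW.dotProduct_mulVec_nonneg (y ∘ Sum.inr)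
    have e : y = Sum.elim (y ∘ Sum.inl) (y ∘ Sum.inr) := (Sum.elim_comp_inl_inr y).symm
    rw [star_trivial] at h1 h2 ⊢
    rw [TmatD, fromBlocks_mulVec]
    nth_rewrite 1 [e]
    rw [sumElim_dotProduct_sumElim]
    simpa using add_nonneg h1 h2

/-- Optimality in the `v`-subproblem: `x̄` is a subgradient of `r*` at `v̄`. -/
lemma v_subgradient {m n : ℕ} {σ : ℝ} {r : (Fin n → ℝ) → ℝ} {A : Matrix (Fin m) (Fin n) ℝ}
    {U : Matrix (Fin n) (Fin n) ℝ} {xk wk : Fin n → ℝ} {zk : Fin m → ℝ} {a b : Fin n → ℝ}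
    {α β : ℝ} (hmin : ∀ v', vObj σ r A U xk zk wk a ≤ vObj σ r A U xk zk wk v')
    (ha : fconj r a = α) (hb : fconj r b = β) :
    α ≤ β + (xk - σ • (Aᵀ *ᵥ zk + Uᵀ *ᵥ wk + a)) ⬝ᵥ (a - b) := by
  refine fconj_le_of_isMin ha hb
    (fun t => -(xk ⬝ᵥ ((1 - t) • a + t • b)) +
      σ / 2 * euclNorm (Aᵀ *ᵥ zk + Uᵀ *ᵥ wk + ((1 - t) • a + t • b)) ^ 2) _
    (σ / 2 * ((b - a) ⬝ᵥ (b - a))) (fun t => ?_) (fun t _ _ => ?_)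
  · simp only [euclNorm_sq, sub_zero, one_smul, zero_smul, add_zero]
    set p := Aᵀ *ᵥ zk + Uᵀ *ᵥ wk
    simp only [dotProduct_add, add_dotProduct, smul_dotProduct, dotProduct_smul, smul_eq_mul,
      sub_dotProduct, dotProduct_sub, dotProduct_comm a p, dotProduct_comm b p,
      dotProduct_comm b a]
    ring
  · simpa [vObj] using hmin ((1 - t) • a + t • b)

lemma Sum_elim_sub {m n : ℕ} (a c : Fin m → ℝ) (b d : Fin n → ℝ) :
    Sum.elim (a - c) (b - d) = Sum.elim a b - Sum.elim c d := by
  ext (i | i) <;> rfl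

lemma Sum_elim_segment {m n : ℕ} (s t : ℝ) (a c : Fin m → ℝ) (b d : Fin n → ℝ) :
    Sum.elim (s • a + t • c) (s • b + t • d) = s • Sum.elim a b + t • Sum.elim c d := by
  ext (i | i) <;> rfl

lemma zwObj_eq {m n : ℕ} (σ : ℝ) (f : (Fin m → ℝ) → ℝ) (A : Matrix (Fin m) (Fin n) ℝ)
    (U : Matrix (Fin n) (Fin n) ℝ) (T : Matrix (Fin m ⊕ Fin n) (Fin m ⊕ Fin n) ℝ)
    (xbar vbar : Fin n → ℝ) (z0 : Fin m → ℝ) (w0 : Fin n → ℝ) (z : Fin m → ℝ) (w : Fin n → ℝ) :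
    zwObj σ f A U T xbar vbar z0 w0 z w = fconj f z +
      ((-(xbar ⬝ᵥ (fromCols Aᵀ Uᵀ *ᵥ Sum.elim z w)) +
        σ / 2 * euclNorm (fromCols Aᵀ Uᵀ *ᵥ Sum.elim z w + vbar) ^ 2 +
        1 / 2 * ((Sum.elim z w - Sum.elim z0 w0) ⬝ᵥ
          (T *ᵥ (Sum.elim z w - Sum.elim z0 w0))) : ℝ) : EReal) := by
  rw [zwObj, fromCols_mulVec_sumElim, Sum_elim_sub]

/-- Optimality in the `(z, w)`-subproblem: `Kᵀ (x̄ - σ (K ȳ + v̄)) + T (y - ȳ)` is a subgradient at `ȳ`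
of `(z, w) ↦ f*(z)`. -/
lemma zw_subgradient {m n : ℕ} {σ : ℝ} {f : (Fin m → ℝ) → ℝ} {A : Matrix (Fin m) (Fin n) ℝ}
    {U : Matrix (Fin n) (Fin n) ℝ} {T : Matrix (Fin m ⊕ Fin n) (Fin m ⊕ Fin n) ℝ}
    (hT : T.PosSemidef) {xbar vbar w0 wa : Fin n → ℝ} {z0 za : Fin m → ℝ}
    {zc : Fin m → ℝ} (wc : Fin n → ℝ) {α β : ℝ}
    (hmin : ∀ z' w', zwObj σ f A U T xbar vbar z0 w0 za wa ≤
      zwObj σ f A U T xbar vbar z0 w0 z' w')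
    (ha : fconj f za = α) (hc : fconj f zc = β) :
    α ≤ β +
      ((xbar - σ • (fromCols Aᵀ Uᵀ *ᵥ Sum.elim za wa + vbar)) ⬝ᵥ
          (fromCols Aᵀ Uᵀ *ᵥ (Sum.elim za wa - Sum.elim zc wc)) +
        (Sum.elim za wa - Sum.elim zc wc) ⬝ᵥ (T *ᵥ (Sum.elim z0 w0 - Sum.elim za wa))) := by
  have hTt : Tᵀ = T := by simpa using hT.isHermitian.eq
  have hs : ∀ a b, b ⬝ᵥ (T *ᵥ a) = a ⬝ᵥ (T *ᵥ b) := fun a b => by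
    rw [dotProduct_mulVec, ← mulVec_transpose, hTt, dotProduct_comm]
  simp only [zwObj_eq] at hmin
  set K := fromCols Aᵀ Uᵀ
  set a := Sum.elim za wa with hadef
  set c := Sum.elim zc wc with hcdef
  set y := Sum.elim z0 w0
  refine fconj_le_of_isMin ha hc
    (fun t => -(xbar ⬝ᵥ (K *ᵥ ((1 - t) • a + t • c))) +
      σ / 2 * euclNorm (K *ᵥ ((1 - t) • a + t • c) + vbar) ^ 2 +
      1 / 2 * (((1 - t) • a + t • c - y) ⬝ᵥ (T *ᵥ ((1 - t) • a + t • c - y)))) _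
    (σ / 2 * ((K *ᵥ (c - a)) ⬝ᵥ (K *ᵥ (c - a))) + 1 / 2 * ((c - a) ⬝ᵥ (T *ᵥ (c - a))))
    (fun t => ?_) (fun t _ _ => ?_)
  · simp only [euclNorm_sq, sub_zero, one_smul, zero_smul, add_zero]
    simp only [mulVec_add, mulVec_sub, mulVec_smul, dotProduct_add, add_dotProduct,
      smul_dotProduct, dotProduct_smul, smul_eq_mul,
      sub_dotProduct, dotProduct_sub, dotProduct_comm vbar, dotProduct_comm (K *ᵥ c) (K *ᵥ a),
      hs a c, hs a y, hs c y]
    ring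
  · have h := hmin ((1 - t) • za + t • zc) ((1 - t) • wa + t • wc)
    rw [Sum_elim_segment, ← hadef, ← hcdef] at h
    simpa using h

/-! ### Proof of the complexity bound -/

/-- **O(1/k) complexity of dHPR in the dual objective error (Theorem 2, second bound).** -/
theorem dHPR_objective_error_complexity
    (m n : ℕ) (σ : ℝ) (hσ : 0 < σ)
    (A : Matrix (Fin m) (Fin n) ℝ)
    (U : Matrix (Fin n) (Fin n) ℝ) (hU : U.PosSemidef)
    (f : (Fin m → ℝ) → ℝ) (hf : ConvexOn ℝ Set.univ f)
    (r : (Fin n → ℝ) → ℝ) (hr : ConvexOn ℝ Set.univ r)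
    (Sz : Matrix (Fin m) (Fin m) ℝ) (hSz : Sz.PosSemidef)
    (hSzA : (Sz + A * Aᵀ).PosDef)
    (lU : ℝ) (hlU : 0 < lU)
    (hSw : (lU • (1 : Matrix (Fin n) (Fin n) ℝ) - U * U).PosSemidef)
    -- a KKT point `u* = (z*, w*, v*, x*)`
    (zs : Fin m → ℝ) (ws vs xs : Fin n → ℝ)
    (hkkt1 : ∀ y : Fin m → ℝ,
      f (A *ᵥ xs) + 1 / 2 * euclNorm (A *ᵥ xs - (zs + A *ᵥ xs)) ^ 2
        ≤ f y + 1 / 2 * euclNorm (y - (zs + A *ᵥ xs)) ^ 2)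
    (hkkt2 : U *ᵥ xs = 0)
    (hkkt3 : ∀ y : Fin n → ℝ,
      r xs + 1 / 2 * euclNorm (xs - (vs + xs)) ^ 2
        ≤ r y + 1 / 2 * euclNorm (y - (vs + xs)) ^ 2)
    (hkkt4 : Aᵀ *ᵥ zs + Uᵀ *ᵥ ws + vs = 0)
    -- a dHPR trajectory `{uᵏ}, {ūᵏ}` with initial point `u⁰`
    (z zb : ℕ → Fin m → ℝ) (w wb v vb x xb : ℕ → Fin n → ℝ)
    (hv : ∀ (k : ℕ) (v' : Fin n → ℝ),
      vObj σ r A U (x k) (z k) (w k) (vb (k + 1)) ≤ vObj σ r A U (x k) (z k) (w k) v')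
    (hx : ∀ k : ℕ, xb (k + 1) = x k - σ • (Aᵀ *ᵥ z k + Uᵀ *ᵥ w k + vb (k + 1)))
    (hzw : ∀ (k : ℕ) (z' : Fin m → ℝ) (w' : Fin n → ℝ),
      zwObj σ f A U (TmatD σ lU A U Sz) (xb (k + 1)) (vb (k + 1)) (z k) (w k)
          (zb (k + 1)) (wb (k + 1))
        ≤ zwObj σ f A U (TmatD σ lU A U Sz) (xb (k + 1)) (vb (k + 1)) (z k) (w k) z' w')
    (hupd : ∀ k : ℕ,
      z (k + 1) = ((k : ℝ) + 2)⁻¹ • z 0 +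
          (((k : ℝ) + 1) / ((k : ℝ) + 2)) • ((2 : ℝ) • zb (k + 1) - z k) ∧
      w (k + 1) = ((k : ℝ) + 2)⁻¹ • w 0 +
          (((k : ℝ) + 1) / ((k : ℝ) + 2)) • ((2 : ℝ) • wb (k + 1) - w k) ∧
      v (k + 1) = ((k : ℝ) + 2)⁻¹ • v 0 +
          (((k : ℝ) + 1) / ((k : ℝ) + 2)) • ((2 : ℝ) • vb (k + 1) - v k) ∧
      x (k + 1) = ((k : ℝ) + 2)⁻¹ • x 0 +
          (((k : ℝ) + 1) / ((k : ℝ) + 2)) • ((2 : ℝ) • xb (k + 1) - x k)) :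
    -- `f*(z*)` and `r*(v*)` are finite, and the two objective-error bounds hold
    (fconj f zs ≠ ⊥ ∧ fconj f zs ≠ ⊤) ∧ (fconj r vs ≠ ⊥ ∧ fconj r vs ≠ ⊤) ∧
    ∀ k : ℕ,
      (fconj f (zb (k + 1)) + fconj r (vb (k + 1)) ≤
        fconj f zs + fconj r vs +
          (((3 * Rinit σ lU A U Sz (z 0 - zs) (w 0 - ws) (x 0 - xs) +
              euclNorm xs / Real.sqrt σ) *
            Rinit σ lU A U Sz (z 0 - zs) (w 0 - ws) (x 0 - xs) / ((k : ℝ) + 1) : ℝ) : EReal)) ∧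
      (fconj f zs + fconj r vs ≤
        fconj f (zb (k + 1)) + fconj r (vb (k + 1)) +
          ((euclNorm xs / Real.sqrt σ *
            Rinit σ lU A U Sz (z 0 - zs) (w 0 - ws) (x 0 - xs) / ((k : ℝ) + 1) : ℝ) : EReal)) := by
  have hfs := fconj_eq_of_prox hf hkkt1
  have hrs := fconj_eq_of_prox hr hkkt3
  refine ⟨⟨fconj_ne_bot f zs, hfs ▸ EReal.coe_ne_top _⟩,
    ⟨fconj_ne_bot r vs, hrs ▸ EReal.coe_ne_top _⟩, fun k => ?_⟩
  have hT := TmatD_posSemidef hσ hlU A hU hSz hSw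
  -- the minimal values are finite since the objectives are finite at `z*` and `v*`
  have hFv : ∀ k, fconj f (zb (k + 1)) = ((fconj f (zb (k + 1))).toReal : EReal) := fun k =>
    (EReal.coe_toReal (fconj_ne_top_of_le hfs (hzw k zs ws)) (fconj_ne_bot _ _)).symm
  have hGv : ∀ k, fconj r (vb (k + 1)) = ((fconj r (vb (k + 1))).toReal : EReal) := fun k =>
    (EReal.coe_toReal (fconj_ne_top_of_le hrs (hv k vs)) (fconj_ne_bot _ _)).symm
  have hKe : ∀ (a : Fin m → ℝ) (b : Fin n → ℝ),
      fromCols Aᵀ Uᵀ *ᵥ Sum.elim a b = Aᵀ *ᵥ a + Uᵀ *ᵥ b := fun a b =>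
    fromCols_mulVec_sumElim _ _ _ _
  -- `U x* = 0` removes the `w`-block from `⟨x*, K y⟩`
  have hKx : ∀ (a : Fin m → ℝ) (b : Fin n → ℝ),
      xs ⬝ᵥ (fromCols Aᵀ Uᵀ *ᵥ Sum.elim a b) = (A *ᵥ xs) ⬝ᵥ a := fun a b => by
    rw [hKe, dotProduct_add, dotProduct_mulVec, vecMul_transpose, dotProduct_mulVec,
      vecMul_transpose, hkkt2, zero_dotProduct, add_zero]
  have hmain := objective_bounds hσ (fromCols Aᵀ Uᵀ) (TmatD σ lU A U Sz) hT
    (fun k => Sum.elim (z k) (w k)) (fun k => Sum.elim (zb k) (wb k)) x xb vb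
    (Sum.elim zs ws) vs xs
    (fun k => (fconj f (zb k)).toReal) (fun k => (fconj r (vb k)).toReal)
    (zs ⬝ᵥ (A *ᵥ xs) - f (A *ᵥ xs)) (vs ⬝ᵥ xs - r xs)
    (by rw [hKe, hkkt4])
    (fun k => by rw [hx k, hKe])
    (fun k => by
      rw [(hupd k).1, (hupd k).2.1]
      ext (i | i) <;> rfl)
    (fun k => (hupd k).2.2.2)
    (fun j k => by rw [hx k]; exact v_subgradient (hv k) (hGv k) (hGv j))
    (fun k => by rw [hx k]; exact v_subgradient (hv k) (hGv k) hrs)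
    (fun k => by
      have h := le_of_fconj_eq (hGv k) xs
      rw [dotProduct_sub, dotProduct_comm xs, dotProduct_comm xs]
      linarith)
    (fun j k => zw_subgradient hT (wb (j + 1)) (hzw k) (hFv k) (hFv j))
    (fun k => zw_subgradient hT ws (hzw k) (hFv k) hfs)
    (fun k => by
      have h := le_of_fconj_eq (hFv k) (A *ᵥ xs)
      rw [← Sum_elim_sub, hKx, dotProduct_sub, dotProduct_comm _ zs, dotProduct_comm _ (zb _)]
      linarith)
    (Rinit σ lU A U Sz (z 0 - zs) (w 0 - ws) (x 0 - xs)) (euclNorm xs / √σ)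
    (by
      rw [Rinit, Mform_apply]
      congr 1
      simp only [← Sum_elim_sub, hKe, euclNorm_sq]
      generalize Aᵀ *ᵥ (z 0 - zs) + Uᵀ *ᵥ (w 0 - ws) = q
      simp only [sub_dotProduct, dotProduct_sub, smul_dotProduct, dotProduct_smul, smul_eq_mul,
        dotProduct_comm q]
      field_simp
      ring)
    (by rw [euclNorm, one_div_mul_eq_div, Real.sqrt_div' _ hσ.le]) k
  have hR0 : 0 ≤ Rinit σ lU A U Sz (z 0 - zs) (w 0 - ws) (x 0 - xs) := Real.sqrt_nonneg _
  generalize Rinit σ lU A U Sz (z 0 - zs) (w 0 - ws) (x 0 - xs) = R at hmain hR0 ⊢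
  generalize euclNorm xs / √σ = X at hmain ⊢
  obtain ⟨hup, hlo⟩ := hmain
  rw [hFv k, hGv k, hfs, hrs]
  have hRk : 0 ≤ R * (R / ((k : ℝ) + 1)) := by positivity
  constructor
  · have h : (fconj f (zb (k + 1))).toReal + (fconj r (vb (k + 1))).toReal ≤
        (zs ⬝ᵥ (A *ᵥ xs) - f (A *ᵥ xs)) + (vs ⬝ᵥ xs - r xs) +
          (3 * R + X) * R / ((k : ℝ) + 1) := by
      rw [mul_div_assoc]
      linarith
    exact_mod_cast h
  · have h : (zs ⬝ᵥ (A *ᵥ xs) - f (A *ᵥ xs)) + (vs ⬝ᵥ xs - r xs) ≤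
        (fconj f (zb (k + 1))).toReal + (fconj r (vb (k + 1))).toReal +
          X * R / ((k : ℝ) + 1) := by
      rw [mul_div_assoc]
      linarith
    exact_mod_cast h
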